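/- Let V be an element of the lattice MON of monoid varieties that is non-commutative ((xy, yx) ∉ θ_V) and completely regular (there exists n ≥ 1 with (x, x^{n+1}) ∈ θ_V). Then C₂ ⊔ (D ⊓ V) = C₂, C₂ < D, and D ⊓ (C₂ ⊔ V) = D, where C₂ = ⟪{(x²,x³),(xy,yx)}⟫ and D = ⟪{(x²,x³),(x²y,xyx),(xyx,yx²)}⟫. -/

import Mathlib

/-!
In `D ⊓ V` the identities `x² = x³` and `x = xⁿ⁺¹` force `x = x²`, and then
`xy = x²y = xyx = yx² = yx`; hence `D ⊓ V ≤ C₂`.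

The inclusion `C₂ ≤ D` is immediate. It is strict because the five-element monoid
`⟨a, b ∣ a² = b² = ba = 0⟩` satisfies the identities of `D` without being commutative.

For `D ≤ C₂ ⊔ V`, let `u = v` hold in both `C₂` and `V`. Evaluating in `{1, 2, 0} ⊆ ℤ/4`,
which satisfies the identities of `C₂`, shows that every letter occurs in `u` and in `v` equally
often up to truncation at `2` (`min_count_of_C2`). If two simple letters occurred in opposite
orders in `u` and `v`, then erasing all other letters would give `xy = yx` in `V`; so `u` and `v`
have the same simple letters in the same order (`simples_eq`). In `D`, squares are central and a
letter occurring at least twice can be collected into a square at the front (`collect`), so the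
two properties together give `u = v` in `D` (`rel_of_invariants`).
-/

/-- The free monoid over a countably infinite alphabet. -/
abbrev F : Type := FreeMonoid ℕ

/-- A congruence on the free monoid is fully invariant if it is stable
under every monoid endomorphism. -/
def IsFullyInvariant (c : Con F) : Prop :=
  ∀ f : F →* F, ∀ u v : F, c u v → c (f u) (f v)

/-- The type of fully invariant congruences on `F`. -/
abbrev FICon : Type := {c : Con F // IsFullyInvariant c}

/-- The smallest fully invariant congruence containing a set of pairs of words. -/
def fiGen (S : Set (F × F)) : Con F :=
  sInf {c : Con F | IsFullyInvariant c ∧ ∀ p ∈ S, c p.1 p.2}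

lemma fiGen_apply (S : Set (F × F)) (u v : F) :
    fiGen S u v ↔ ∀ c : Con F, (IsFullyInvariant c ∧ ∀ p ∈ S, c p.1 p.2) → c u v :=
  ⟨fun h c hc => h c hc, fun h c hc => h c hc⟩

lemma isFullyInvariant_fiGen (S : Set (F × F)) : IsFullyInvariant (fiGen S) := by
  intro f u v h
  rw [fiGen_apply] at h ⊢
  exact fun c hc => hc.1 f u v (h c hc)

/-- The fully invariant closure of a congruence, as an element of `FICon`. -/
def fiCl (c : Con F) : FICon :=
  ⟨fiGen {p | c p.1 p.2}, isFullyInvariant_fiGen _⟩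

lemma le_fiCl (c : Con F) : c ≤ (fiCl c).val := by
  refine le_sInf fun b hb => ?_
  rw [Con.le_def]
  exact fun {u v} huv => hb.2 (u, v) huv

lemma fiGC : GaloisConnection fiCl (Subtype.val : FICon → Con F) := by
  intro c d
  constructor
  · exact fun h => le_trans (le_fiCl c) h
  · intro h
    have hle : (fiCl c).val ≤ d.val :=
      sInf_le ⟨d.2, fun p hp => (Con.le_def.mp h) hp⟩
    exact hle

/-- The Galois insertion between congruences and fully invariant congruences. -/
def fiGI : GaloisInsertion fiCl (Subtype.val : FICon → Con F) :=
  fiGC.toGaloisInsertion fun d => le_fiCl d.val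

noncomputable instance : CompleteLattice FICon := fiGI.liftCompleteLattice

/-- The lattice of monoid varieties: the order dual of the lattice of fully
invariant congruences on the free monoid `F`. -/
abbrev MON : Type := FIConᵒᵈ

/-- The monoid variety given by the identity system `S`. -/
def gen (S : Set (F × F)) : MON :=
  OrderDual.toDual ⟨fiGen S, isFullyInvariant_fiGen S⟩

/-- The fully invariant congruence (equational theory) of a monoid variety. -/
def theta (V : MON) : Con F := (OrderDual.ofDual V).val

/-- Fixed pairwise distinct letters. -/
def x : F := FreeMonoid.of 0
def y : F := FreeMonoid.of 1
def z : F := FreeMonoid.of 2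
def r : F := FreeMonoid.of 3

/-- The content of a word: the set of letters occurring in it. -/
def con (w : F) : Set ℕ := {a | a ∈ FreeMonoid.toList w}

/-- The set of letters that are simple in a word (occur exactly once). -/
def simpleIn (w : F) : Set ℕ := {a | (FreeMonoid.toList w).count a = 1}

/-- Neutral element of a lattice. -/
def IsNeutralElt {L : Type*} [Lattice L] (a : L) : Prop :=
  ∀ y z : L, (a ⊔ y) ⊓ (y ⊔ z) ⊓ (z ⊔ a) = (a ⊓ y) ⊔ (y ⊓ z) ⊔ (z ⊓ a)

/-- Costandard element of a lattice. -/
def IsCostandardElt {L : Type*} [Lattice L] (a : L) : Prop :=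
  ∀ y z : L, (a ⊓ y) ⊔ z = (a ⊔ z) ⊓ (y ⊔ z)

/-- Codistributive element of a lattice. -/
def IsCodistributiveElt {L : Type*} [Lattice L] (a : L) : Prop :=
  ∀ y z : L, a ⊓ (y ⊔ z) = (a ⊓ y) ⊔ (a ⊓ z)

/-- Modular element of a lattice. -/
def IsModularElt {L : Type*} [Lattice L] (a : L) : Prop :=
  ∀ y z : L, y ≤ z → (a ⊔ y) ⊓ z = (a ⊓ z) ⊔ y

/-- Upper-modular element of a lattice. -/
def IsUpperModularElt {L : Type*} [Lattice L] (a : L) : Prop :=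
  ∀ y z : L, y ≤ a → a ⊓ (y ⊔ z) = y ⊔ (a ⊓ z)

/-- Lower-modular element of a lattice. -/
def IsLowerModularElt {L : Type*} [Lattice L] (a : L) : Prop :=
  ∀ y z : L, a ≤ y → a ⊔ (y ⊓ z) = y ⊓ (a ⊔ z)

/-- The variety `SL` of semilattice monoids. -/
def SLv : MON := gen {(x*x, x), (x*y, y*x)}

/-- The variety `C₂`. -/
def C2v : MON := gen {(x*x, x*x*x), (x*y, y*x)}

/-- The variety `Cₙ`. -/
def Cv (n : ℕ) : MON := gen {(x^n, x^(n+1)), (x*y, y*x)}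

/-- The variety `Aₙ` of Abelian groups of exponent dividing `n`. -/
def Av (n : ℕ) : MON := gen {(x^n, 1), (x*y, y*x)}

/-- The variety `D`. -/
def Dv : MON := gen {(x*x, x*x*x), (x*x*y, x*y*x), (x*y*x, y*x*x)}

/-- The variety `B₂,₃`. -/
def Bv : MON := gen {(x*x, x*x*x)}

/-- The word `s = yxyzxz`. -/
def s : F := y*x*y*z*x*z

/-- The word `t = yxzxyxz`. -/
def t : F := y*x*z*x*y*x*z

/-- The variety `Q`. -/
def Qv : MON := gen {(s, t)}

/-- The variety `F` (denoted `Fv` to avoid a clash with the free monoid). -/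
def Fv : MON :=
  gen {(x*y*x, x*y*x*x), (x*x*y*y, y*y*x*x), (x*x*y, x*x*y*x), (x*y*r*x*y, y*x*r*x*y)}

/-! ### Identities and varieties -/

theorem le_iff_theta (V W : MON) : V ≤ W ↔ ∀ u v : F, theta W u v → theta V u v := Iff.rfl

theorem theta_inv (V : MON) : IsFullyInvariant (theta V) := (OrderDual.ofDual V).2

theorem theta_gen_base {S : Set (F × F)} {p : F × F} (hp : p ∈ S) : theta (gen S) p.1 p.2 :=
  (fiGen_apply S _ _).2 fun _ hc => hc.2 p hp

theorem theta_gen_le {S : Set (F × F)} {c : Con F} (hc : IsFullyInvariant c)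
    (hS : ∀ p ∈ S, c p.1 p.2) {u v : F} (h : theta (gen S) u v) : c u v :=
  (fiGen_apply S u v).1 h c ⟨hc, hS⟩

/-- A monoid satisfying the identities `S` satisfies all their consequences. -/
theorem eval_eq_of_gen {M : Type} [Monoid M] {S : Set (F × F)}
    (hS : ∀ g : F →* M, ∀ p ∈ S, g p.1 = g p.2) {u v : F} (h : theta (gen S) u v)
    (g : F →* M) : g u = g v := by
  let c : Con F :=
    { r := fun u v => ∀ g : F →* M, g u = g v
      iseqv := ⟨fun _ _ => rfl, fun h g => (h g).symm, fun h h' g => (h g).trans (h' g)⟩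
      mul' := fun h h' g => by rw [map_mul, map_mul, h g, h' g] }
  exact theta_gen_le (c := c) (fun f u v huv g => huv (g.comp f))
    (fun p hp g => hS g p hp) h g

/-- The endomorphism sending `x` to `a`, `y` to `b` and every other letter to the empty word. -/
def substXY (a b : F) : F →* F :=
  FreeMonoid.lift fun n => if n = 0 then a else if n = 1 then b else 1

@[simp] theorem substXY_x (a b : F) : substXY a b x = a := by
  simp [substXY, x]

@[simp] theorem substXY_y (a b : F) : substXY a b y = b := by
  simp [substXY, y]

/-! ### The monoid separating `D` from commutative varieties -/

/-- The monoid `⟨a, b ∣ a² = b² = ba = 0⟩` with zero. -/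
inductive N5 : Type
  | one | a | b | ab | zero
  deriving DecidableEq

namespace N5

instance : Fintype N5 := ⟨{one, a, b, ab, zero}, by intro p; cases p <;> decide⟩

/-- Multiplication of `N5`; the only nonzero product of non-identity elements is `a * b`. -/
def mul : N5 → N5 → N5
  | one, q => q
  | p, one => p
  | a, b => ab
  | _, _ => zero

instance : Monoid N5 where
  mul := mul
  one := one
  mul_assoc := by
    change ∀ p q w : N5, mul (mul p q) w = mul p (mul q w)
    decide
  one_mul := by
    change ∀ p : N5, mul one p = p
    decide
  mul_one := by
    change ∀ p : N5, mul p one = p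
    decide

theorem laws : ∀ p q : N5, mul p p = mul (mul p p) p ∧
    mul (mul p p) q = mul (mul p q) p ∧ mul (mul p q) p = mul (mul q p) p := by
  decide

end N5

theorem not_comm_D : ¬ theta Dv (x*y) (y*x) := by
  intro h
  have hS : ∀ g : F →* N5, ∀ p ∈ ({(x*x, x*x*x), (x*x*y, x*y*x), (x*y*x, y*x*x)} : Set (F × F)),
      g p.1 = g p.2 := by
    intro g p hp
    have hl := N5.laws (g x) (g y)
    rcases hp with rfl | rfl | rfl
    · simp only [map_mul]
      exact hl.1
    · simp only [map_mul]
      exact hl.2.1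
    · simp only [map_mul]
      exact hl.2.2
  have := eval_eq_of_gen hS h (FreeMonoid.lift fun n => if n = 0 then N5.a else N5.b)
  simp only [map_mul, x, y, FreeMonoid.lift_eval_of] at this
  have h2 : N5.mul N5.a N5.b = N5.mul N5.b N5.a := this
  revert h2
  decide

/-! ### Letter multiplicities are determined up to truncation by `C₂` -/

theorem powers_two_law (p : Submonoid.powers (2 : ZMod 4)) : p * p = p * p * p := by
  obtain ⟨_, n, rfl⟩ := p
  apply Subtype.ext
  change (2 : ZMod 4)^n * 2^n = 2^n * 2^n * 2^n
  rcases n with _ | n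
  · simp
  · have h4 : (2 : ZMod 4)^(n+1) * 2^(n+1) = 0 := by
      have h0 : (2 : ZMod 4) * 2 = 0 := by decide
      calc (2 : ZMod 4)^(n+1) * 2^(n+1) = 2^n * 2^n * (2 * 2) := by ring
        _ = 0 := by rw [h0, mul_zero]
    rw [h4, zero_mul]

theorem two_pow_inj {m k : ℕ} (h : (2 : ZMod 4)^m = 2^k) : min 2 m = min 2 k := by
  have h0 : ∀ n, (2 : ZMod 4)^(n+2) = 0 := by
    intro n
    rw [pow_add, show (2 : ZMod 4)^2 = 0 by decide, mul_zero]
  have h1 : ∀ n, (2 : ZMod 4)^n = if n = 0 then 1 else if n = 1 then 2 else 0 := by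
    rintro (_ | _ | n)
    · rfl
    · rfl
    · simpa using h0 n
  have h12 : (1 : ZMod 4) ≠ 2 := by decide
  have h10 : (1 : ZMod 4) ≠ 0 := by decide
  have h20 : (2 : ZMod 4) ≠ 0 := by decide
  rw [h1 m, h1 k] at h
  grind

theorem min_count_of_C2 {u v : F} (h : theta C2v u v) (a : ℕ) :
    min 2 (u.toList.count a) = min 2 (v.toList.count a) := by
  have hS : ∀ g : F →* Submonoid.powers (2 : ZMod 4),
      ∀ p ∈ ({(x*x, x*x*x), (x*y, y*x)} : Set (F × F)), g p.1 = g p.2 := by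
    intro g p hp
    rcases hp with rfl | rfl
    · simpa only [map_mul] using powers_two_law (g x)
    · simp only [map_mul]
      exact mul_comm _ _
  let g : F →* Submonoid.powers (2 : ZMod 4) :=
    FreeMonoid.lift fun n => if n = a then ⟨2, Submonoid.mem_powers 2⟩ else 1
  have hg : ∀ w : F, (g w : ZMod 4) = 2 ^ (w.toList.count a) := by
    intro w
    induction w using FreeMonoid.inductionOn' with
    | one => simp
    | of_mul b w ih =>
      rw [map_mul, Submonoid.coe_mul, ih, FreeMonoid.toList_of_mul, List.count_cons]
      by_cases hb : b = a <;> simp [g, hb, pow_succ']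
  have := congrArg (Subtype.val) (eval_eq_of_gen hS h g)
  rw [hg, hg] at this
  exact two_pow_inj this

/-! ### Simple letters and their order -/

/-- The list of simple letters of a word, in order of occurrence. -/
def simples (l : List ℕ) : List ℕ := l.filter fun a => l.count a = 1

theorem length_filter_pair {a b : ℕ} (hab : a ≠ b) (l : List ℕ) :
    (l.filter fun c => c = a ∨ c = b).length = l.count a + l.count b := by
  induction l with
  | nil => rfl
  | cons c l ih =>
    rw [List.filter_cons, List.count_cons, List.count_cons]
    by_cases h1 : c = a
    · subst h1
      simp [hab] at ih ⊢
      omega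
    · by_cases h2 : c = b
      · subst h2
        simp [h1] at ih ⊢
        omega
      · simpa [h1, h2] using ih

theorem filter_pair_of_sublist_simples {a b : ℕ} {l : List ℕ}
    (h : List.Sublist [a, b] (simples l)) :
    a ≠ b ∧ (l.filter fun c => c = a ∨ c = b) = [a, b] ∧ l.count a = 1 ∧ l.count b = 1 := by
  have ha : l.count a = 1 := by
    have : a ∈ simples l := h.subset (by simp)
    simpa [simples] using (List.mem_filter.1 this).2
  have hb : l.count b = 1 := by
    have : b ∈ simples l := h.subset (by simp)
    simpa [simples] using (List.mem_filter.1 this).2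
  have hl : List.Sublist [a, b] l := h.trans List.filter_sublist
  have hab : a ≠ b := by
    rintro rfl
    have := hl.count_le a
    simp at this
    omega
  refine ⟨hab, ?_, ha, hb⟩
  have h2 : List.Sublist [a, b] (l.filter fun c => c = a ∨ c = b) := by
    simpa using hl.filter fun c => decide (c = a ∨ c = b)
  refine (h2.eq_of_length ?_).symm
  rw [length_filter_pair hab l, ha, hb]
  rfl

/-- Erasing letters other than `a` and `b`, and renaming these to `x` and `y`. -/
def renamePair (a b : ℕ) : F →* F :=
  FreeMonoid.lift fun c => if c = a then x else if c = b then y else 1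

theorem renamePair_filter (a b : ℕ) (w : F) :
    renamePair a b w =
      renamePair a b (FreeMonoid.ofList (w.toList.filter fun c => c = a ∨ c = b)) := by
  induction w using FreeMonoid.inductionOn' with
  | one => rfl
  | of_mul c w ih =>
    rw [map_mul, ih, FreeMonoid.toList_of_mul, List.filter_cons]
    by_cases h : c = a ∨ c = b
    · simp only [h, decide_true, if_true, FreeMonoid.ofList_cons, map_mul]
    · have h' := not_or.1 h
      simp [renamePair, h'.1, h'.2]

theorem simples_eq {V : MON} (hnc : ¬ theta V (x*y) (y*x)) {u v : F}
    (hc : ∀ a, min 2 (u.toList.count a) = min 2 (v.toList.count a)) (h : theta V u v) :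
    simples u.toList = simples v.toList := by
  have hc1 : ∀ a, u.toList.count a = 1 ↔ v.toList.count a = 1 := fun a => by
    have := hc a
    omega
  have hperm : (simples u.toList).Perm (simples v.toList) := by
    rw [List.perm_iff_count]
    intro a
    have key : ∀ l : List ℕ, (simples l).count a = if l.count a = 1 then 1 else 0 := by
      intro l
      split_ifs with h1
      · rw [simples, List.count_filter (by simpa using h1), h1]
      · rw [List.count_eq_zero]
        intro hm
        exact h1 (by simpa using (List.mem_filter.1 hm).2)
    rw [key, key]
    simp only [hc1]
  let R : ℕ → ℕ → Prop := fun a b => (v.toList.filter fun c => c = a ∨ c = b) = [a, b]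
  have hRv : (simples v.toList).Pairwise R :=
    List.pairwise_iff_forall_sublist.2 fun hs => (filter_pair_of_sublist_simples hs).2.1
  have hRu : (simples u.toList).Pairwise R := by
    refine List.pairwise_iff_forall_sublist.2 ?_
    intro a b hs
    obtain ⟨hab, hfu, hua, hub⟩ := filter_pair_of_sublist_simples hs
    have hva := (hc1 a).1 hua
    have hvb := (hc1 b).1 hub
    have hlen := length_filter_pair hab v.toList
    rw [hva, hvb] at hlen
    obtain ⟨p, q, hpq⟩ := List.length_eq_two.1 hlen
    have hca : (v.toList.filter fun c => c = a ∨ c = b).count a = 1 := by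
      rw [List.count_filter (by simp), hva]
    have hcb : (v.toList.filter fun c => c = a ∨ c = b).count b = 1 := by
      rw [List.count_filter (by simp), hvb]
    rw [hpq] at hca hcb
    have hcases : (p = a ∧ q = b) ∨ (p = b ∧ q = a) := by
      simp only [List.count_cons, List.count_nil, beq_iff_eq] at hca hcb
      grind
    rcases hcases with ⟨rfl, rfl⟩ | ⟨rfl, rfl⟩
    · exact hpq
    · exfalso
      apply hnc
      have := theta_inv V (renamePair q p) u v h
      rw [renamePair_filter q p u, renamePair_filter q p v, hfu, hpq] at this
      simpa [FreeMonoid.ofList_cons, renamePair, hab, hab.symm] using this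
  refine hperm.eq_of_pairwise ?_ hRu hRv
  intro a b _ _ h1 h2
  have h3 : (v.toList.filter fun c => c = a ∨ c = b) = [b, a] := by
    simpa only [R, or_comm] using h2
  have := h1.symm.trans h3
  simp at this
  exact this.1

/-! ### Normal forms in `D` -/

theorem D_cube (a : F) : theta Dv (a*a) (a*a*a) := by
  have := theta_inv Dv (substXY a 1) _ _
    (theta_gen_base (p := (x*x, x*x*x)) (by simp) : theta Dv (x*x) (x*x*x))
  simpa using this

theorem D_left (a b : F) : theta Dv (a*a*b) (a*b*a) := by
  have := theta_inv Dv (substXY a b) _ _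
    (theta_gen_base (p := (x*x*y, x*y*x)) (by simp) : theta Dv (x*x*y) (x*y*x))
  simpa using this

theorem D_right (a b : F) : theta Dv (a*b*a) (b*a*a) := by
  have := theta_inv Dv (substXY a b) _ _
    (theta_gen_base (p := (x*y*x, y*x*x)) (by simp) : theta Dv (x*y*x) (y*x*x))
  simpa using this

theorem D_central (a b : F) : theta Dv (a*a*b) (b*a*a) :=
  (theta Dv).trans (D_left a b) (D_right a b)

theorem D_central_mul (a b c : F) : theta Dv (b*(a*a*c)) (a*a*(b*c)) := by
  have := (theta Dv).mul ((theta Dv).symm (D_central a b)) ((theta Dv).refl c)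
  simpa only [mul_assoc] using this

/-- A square absorbs all further occurrences of its letter. -/
theorem absorb (a : ℕ) (l : List ℕ) :
    theta Dv (.of a * .of a * .ofList l) (.of a * .of a * .ofList (l.filter (· ≠ a))) := by
  induction l with
  | nil => exact (theta Dv).refl _
  | cons b l ih =>
    by_cases hb : b = a
    · subst hb
      have h1 := (theta Dv).mul ((theta Dv).symm (D_cube (.of b)))
        ((theta Dv).refl (.ofList l : F))
      have h2 := (theta Dv).trans h1 ih
      simpa [FreeMonoid.ofList_cons, mul_assoc] using h2
    · have h1 := (theta Dv).symm (D_central_mul (.of a) (.of b) (.ofList l))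
      have h2 := (theta Dv).mul ((theta Dv).refl (.of b : F)) ih
      have h3 := D_central_mul (.of a) (.of b) (.ofList (l.filter (· ≠ a)))
      have h4 := (theta Dv).trans h1 ((theta Dv).trans h2 h3)
      simpa [FreeMonoid.ofList_cons, hb] using h4

/-- A letter with at least two occurrences can be collected into a square at the front. -/
theorem collect (a : ℕ) (l : List ℕ) (h : 2 ≤ l.count a) :
    theta Dv (.ofList l) (.of a * .of a * .ofList (l.filter (· ≠ a))) := by
  induction l with
  | nil => simp at h
  | cons b l ih =>
    by_cases hb : b = a
    · subst hb
      have hmem : b ∈ l := by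
        rw [List.count_cons_self] at h
        exact List.count_pos_iff.1 (by omega)
      obtain ⟨p, q, rfl⟩ := List.append_of_mem hmem
      have h1 := (theta Dv).mul ((theta Dv).symm (D_left (.of b) (.ofList p)))
        ((theta Dv).refl (.ofList q : F))
      have h2 := absorb b (p ++ q)
      rw [FreeMonoid.ofList_append] at h2
      have h3 := (theta Dv).trans h1 (by simpa only [mul_assoc] using h2)
      simpa [FreeMonoid.ofList_cons, FreeMonoid.ofList_append, mul_assoc] using h3
    · have h2 := (theta Dv).mul ((theta Dv).refl (.of b : F))
        (ih (by simpa [List.count_cons, hb] using h))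
      have h3 := D_central_mul (.of a) (.of b) (.ofList (l.filter (· ≠ a)))
      have h4 := (theta Dv).trans h2 h3
      simpa [FreeMonoid.ofList_cons, hb] using h4

theorem count_filter_ne (a b : ℕ) (l : List ℕ) :
    (l.filter (· ≠ a)).count b = if b = a then 0 else l.count b := by
  split_ifs with h
  · subst h
    rw [List.count_eq_zero]
    simp
  · rw [List.count_filter (by simpa using h)]

theorem simples_filter_ne (a : ℕ) (l : List ℕ) (h : 2 ≤ l.count a) :
    simples (l.filter (· ≠ a)) = simples l := by
  unfold simples
  rw [List.filter_filter]
  refine List.filter_congr fun b _ => ?_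
  rw [count_filter_ne]
  by_cases hb : b = a
  · subst hb
    have : l.count b ≠ 1 := by omega
    simp [this]
  · simp [hb]

theorem simples_of_linear {l : List ℕ} (h : ∀ a, l.count a < 2) : simples l = l := by
  refine List.filter_eq_self.2 fun a ha => ?_
  have h1 := List.count_pos_iff.2 ha
  have h2 := h a
  have : l.count a = 1 := by omega
  simpa using this

/-- Words with the same truncated multiplicities and the same sequence of simple letters are
equal in `D`. -/
theorem rel_of_invariants (n : ℕ) : ∀ u v : List ℕ, u.length = n →
    (∀ a, min 2 (u.count a) = min 2 (v.count a)) → simples u = simples v →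
    theta Dv (.ofList u) (.ofList v) := by
  induction n using Nat.strong_induction_on with
  | _ n ih =>
    intro u v hn hc hs
    by_cases hlin : ∃ a, 2 ≤ u.count a
    · obtain ⟨a, ha⟩ := hlin
      have hva : 2 ≤ v.count a := by
        have := hc a
        omega
      have hlt : (u.filter (· ≠ a)).length < n := by
        rw [← hn]
        refine List.length_filter_lt_length_iff_exists.2 ⟨a, ?_, by simp⟩
        exact List.count_pos_iff.1 (by omega)
      have hrec := ih _ hlt (u.filter (· ≠ a)) (v.filter (· ≠ a)) rfl
        (fun b => by
          rw [count_filter_ne, count_filter_ne]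
          split_ifs
          · rfl
          · exact hc b)
        (by rw [simples_filter_ne a u ha, simples_filter_ne a v hva, hs])
      exact (theta Dv).trans (collect a u ha) ((theta Dv).trans
        ((theta Dv).mul ((theta Dv).refl _) hrec) ((theta Dv).symm (collect a v hva)))
    · push Not at hlin
      have hv : ∀ a, v.count a < 2 := fun a => by
        have := hc a
        have := hlin a
        omega
      rw [simples_of_linear hlin, simples_of_linear hv] at hs
      rw [hs]
      exact (theta Dv).refl _

/-! ### The three lattice relations -/

theorem D_inf_le_C2 (V : MON) (hcr : ∃ n : ℕ, 1 ≤ n ∧ theta V x (x^(n+1))) :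
    Dv ⊓ V ≤ C2v := by
  obtain ⟨n, hn, hx⟩ := hcr
  have hD := (le_iff_theta (Dv ⊓ V) Dv).1 inf_le_left
  have hV := (le_iff_theta (Dv ⊓ V) V).1 inf_le_right
  generalize Dv ⊓ V = W at hD hV ⊢
  have hpow : ∀ k, theta W (x*x) (x^(k+2)) := by
    intro k
    induction k with
    | zero =>
      rw [zero_add, pow_two]
      exact (theta W).refl _
    | succ k ih =>
      have h1 := (theta W).mul ih ((theta W).refl x)
      rw [← pow_succ] at h1
      exact (theta W).trans (hD _ _ (D_cube x)) h1
  have hxx : theta W x (x*x) := by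
    obtain ⟨k, rfl⟩ := Nat.exists_eq_add_of_le' hn
    exact (theta W).trans (hV _ _ hx) ((theta W).symm (hpow k))
  have hcomm : theta W (x*y) (y*x) := by
    have h1 := (theta W).mul hxx ((theta W).refl y)
    have h2 := (theta W).mul ((theta W).refl y) hxx
    rw [← mul_assoc] at h2
    exact (theta W).trans h1 ((theta W).trans (hD _ _ (D_central x y)) ((theta W).symm h2))
  rw [le_iff_theta]
  intro u v h
  refine theta_gen_le (theta_inv W) ?_ h
  rintro p (rfl | rfl)
  · exact hD _ _ (D_cube x)
  · exact hcomm

theorem C2_comm : theta C2v (x*y) (y*x) :=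
  theta_gen_base (p := (x*y, y*x)) (by simp)

theorem C2_lt_D : C2v < Dv := by
  refine lt_of_le_not_ge ?_ fun h => not_comm_D ((le_iff_theta _ _).1 h _ _ C2_comm)
  rw [le_iff_theta]
  intro u v h
  refine theta_gen_le (theta_inv C2v) ?_ h
  have hc := C2_comm
  rintro p (rfl | rfl | rfl)
  · exact theta_gen_base (p := (x*x, x*x*x)) (by simp)
  · have := (theta C2v).mul ((theta C2v).refl x) hc
    simpa only [mul_assoc] using this
  · exact (theta C2v).mul hc ((theta C2v).refl x)

theorem D_le_C2_sup (V : MON) (hnc : ¬ theta V (x*y) (y*x)) : Dv ≤ C2v ⊔ V := by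
  rw [le_iff_theta]
  intro u v h
  have hC := min_count_of_C2 ((le_iff_theta C2v (C2v ⊔ V)).1 le_sup_left u v h)
  have hV := (le_iff_theta V (C2v ⊔ V)).1 le_sup_right u v h
  exact rel_of_invariants _ u.toList v.toList rfl hC (simples_eq hnc hC hV)

theorem statement9 (V : MON) (hnc : ¬ theta V (x*y) (y*x))
    (hcr : ∃ n : ℕ, 1 ≤ n ∧ theta V x (x^(n+1))) :
    C2v ⊔ (Dv ⊓ V) = C2v ∧ C2v < Dv ∧ Dv ⊓ (C2v ⊔ V) = Dv :=
  ⟨sup_eq_left.2 (D_inf_le_C2 V hcr), C2_lt_D, inf_eq_left.2 (D_le_C2_sup V hnc)⟩
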